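/- arXiv:1804.02268 — 2 statements merged into one kernel-verified Lean document; each statement's English description precedes it below -/
import Mathlib

section
/- Let u_i be a parallel type and let (t_{i,a})_{a∈A} ∈ ℝ^A be standard prices (all nonnegative, with min_{a∈A} t_{i,a} = 0). Then: (i) for all a,b ∈ A with 0 ≤ t_{i,a} ≤ p_{i,a} and 0 ≤ t_{i,b} ≤ p_{i,b}, one has p_{i,a} − t_{i,a} ≥ p_{i,b} − t_{i,b} if and only if u_{i,a}(t_{i,a}) ≥ u_{i,b}(t_{i,b}); and (ii) argmax_{a∈A} u_{i,a}(t_{i,a}) = argmax_{a∈A} (p_{i,a} − t_{i,a}). -/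
/-!
Common framework: agents indexed by `I`, alternatives `A` (finite, nonempty).
A type of an agent is a family `u : A → ℝ → ℝ`, where `u a z` is the utility
when alternative `a` is selected and the agent pays `z`.
-/

noncomputable section

namespace NQLSC

/-- A type (utility family) of an agent. -/
abbrev Util (A : Type*) := A → ℝ → ℝ

variable {A I : Type*}

/-- (S1): each `u a` is continuous and strictly decreasing in the payment. -/
def S1 (u : Util A) : Prop := ∀ a, Continuous (u a) ∧ StrictAnti (u a)

/-- `min_{a'∈A} u_{a'}(0)`, the value of the worst alternative at zero payment. -/
def minVal [Fintype A] [Nonempty A] (u : Util A) : ℝ :=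
  Finset.univ.inf' Finset.univ_nonempty (fun a => u a 0)

/-- (S2): as the payment tends to `+∞`, the utility of every alternative drops
(strictly) below `min_{a'} u_{a'}(0)`; for strictly decreasing utilities this is
equivalent to the utility being below that value at some payment. -/
def S2 [Fintype A] [Nonempty A] (u : Util A) : Prop :=
  ∀ a, ∃ z : ℝ, u a z < minVal u

/-- The willingness to pay `p_a = u_a⁻¹(min_{a'} u_{a'}(0))` (under (S1),(S2) this
`sInf` is the unique payment at which `u a` attains `minVal u`). -/
def wtp [Fintype A] [Nonempty A] (u : Util A) (a : A) : ℝ :=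
  sInf {z : ℝ | u a z ≤ minVal u}

/-- A parallel type: (S1), (S2), and for all `a, b` with `v_a ≥ v_b` and all
`z ∈ [0, p_b]`, `u_a (z + (p_a − p_b)) = u_b z`. -/
def IsParallel [Fintype A] [Nonempty A] (u : Util A) : Prop :=
  S1 u ∧ S2 u ∧ ∀ a b : A, u b 0 ≤ u a 0 → ∀ z : ℝ, 0 ≤ z → z ≤ wtp u b →
    u a (z + (wtp u a - wtp u b)) = u b z

/-- Unrestricted willingness to pay: every nonnegative vector with a zero entry is
the willingness-to-pay vector of some type in the domain. -/
def UnrestrictedWTP [Fintype A] [Nonempty A] (U : Set (Util A)) : Prop :=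
  ∀ lam : A → ℝ, (∀ a, 0 ≤ lam a) → (∃ a, lam a = 0) →
    ∃ u ∈ U, ∀ a, wtp u a = lam a

/-- Dominant-strategy incentive compatibility of a (deterministic) mechanism `(x,t)`
on the domain `𝒰 = ∏ i, U i`. -/
def DSIC [DecidableEq I] (U : I → Set (Util A)) (x : (I → Util A) → A)
    (t : (I → Util A) → I → ℝ) : Prop :=
  ∀ uh : I → Util A, (∀ j, uh j ∈ U j) → ∀ i, ∀ ui ∈ U i,
    ui (x uh) (t uh i) ≤
      ui (x (Function.update uh i ui)) (t (Function.update uh i ui) i)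

/-- Individual rationality. -/
def IR [Fintype A] [Nonempty A] [DecidableEq I] (U : I → Set (Util A))
    (x : (I → Util A) → A) (t : (I → Util A) → I → ℝ) : Prop :=
  ∀ uh : I → Util A, (∀ j, uh j ∈ U j) → ∀ i, ∀ ui ∈ U i,
    minVal ui ≤ ui (x (Function.update uh i ui)) (t (Function.update uh i ui) i)

/-- No subsidy: the mechanism never makes positive transfers to an agent. -/
def NoSubsidy (U : I → Set (Util A)) (t : (I → Util A) → I → ℝ) : Prop :=
  ∀ u : I → Util A, (∀ j, u j ∈ U j) → ∀ i, 0 ≤ t u i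

/-- Ontoness of the choice rule on the given domain. -/
def OntoMech (U : I → Set (Util A)) (x : (I → Util A) → A) : Prop :=
  ∀ a, ∃ u : I → Util A, (∀ j, u j ∈ U j) ∧ x u = a

/-!
A parallel type is a single strictly increasing curve `φ` read at the surplus `p_a - z`: shifting
payments by `p_a - p_b` moves every `u b` onto the utility of the alternative with the highest
value, so `u b z = φ (p_b - z)` for `0 ≤ z ≤ p_b`. Prices above the willingness to pay have negative
surplus and utility below `minVal u`, and as soon as some alternative is affordable they lose to it
in both comparisons.
-/

theorem sInf_setOf_apply_le_apply {α β : Type*} [ConditionallyCompleteLinearOrder α] [Preorder β]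
    {f : α → β} (hf : StrictAnti f) (p : α) : sInf {z | f z ≤ f p} = p := by
  simp only [hf.le_iff_ge]
  exact csInf_Ici

section WillingnessToPay

variable [Fintype A] [Nonempty A] {u : Util A}

theorem minVal_le (u : Util A) (a : A) : minVal u ≤ u a 0 :=
  Finset.inf'_le _ (Finset.mem_univ a)

theorem apply_wtp (h1 : S1 u) (h2 : S2 u) (a : A) : u a (wtp u a) = minVal u := by
  obtain ⟨z, hz⟩ := h2 a
  obtain ⟨p, hp⟩ : minVal u ∈ Set.range (u a) :=
    mem_range_of_exists_le_of_exists_ge (h1 a).1 ⟨z, hz.le⟩ ⟨0, minVal_le u a⟩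
  rw [wtp, ← hp, sInf_setOf_apply_le_apply (h1 a).2]

theorem le_wtp_iff (h1 : S1 u) (h2 : S2 u) {a : A} {z : ℝ} :
    z ≤ wtp u a ↔ minVal u ≤ u a z := by
  rw [← apply_wtp h1 h2 a, (h1 a).2.le_iff_ge]

theorem wtp_nonneg (h1 : S1 u) (h2 : S2 u) (a : A) : 0 ≤ wtp u a :=
  (le_wtp_iff h1 h2).2 (minVal_le u a)

theorem wtp_lt_iff (h1 : S1 u) (h2 : S2 u) {a : A} {z : ℝ} :
    wtp u a < z ↔ u a z < minVal u :=
  lt_iff_lt_of_le_iff_le (le_wtp_iff h1 h2)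

theorem IsParallel.exists_strictMono_apply_eq (hu : IsParallel u) :
    ∃ φ : ℝ → ℝ, StrictMono φ ∧
      ∀ a z, 0 ≤ z → z ≤ wtp u a → u a z = φ (wtp u a - z) := by
  obtain ⟨h1, -, hparallel⟩ := hu
  obtain ⟨m, hm⟩ := Finite.exists_max fun a => u a 0
  refine ⟨fun s => u m (wtp u m - s), fun s t hst => (h1 m).2 (sub_lt_sub_left hst _),
    fun a z hz0 hz => ?_⟩
  rw [← hparallel m a (hm a) z hz0 hz]
  congr 1
  ring

theorem IsParallel.wtp_sub_le_wtp_sub_iff (hu : IsParallel u) {a b : A} {x y : ℝ}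
    (hx : 0 ≤ x) (hy : 0 ≤ y) (hxy : x ≤ wtp u a ∨ y ≤ wtp u b) :
    wtp u b - y ≤ wtp u a - x ↔ u b y ≤ u a x := by
  obtain ⟨φ, hφ, hφu⟩ := hu.exists_strictMono_apply_eq
  obtain ⟨h1, h2, -⟩ := hu
  rcases le_or_gt x (wtp u a) with hxa | hxa <;> rcases le_or_gt y (wtp u b) with hyb | hyb
  · rw [hφu a x hx hxa, hφu b y hy hyb, hφ.le_iff_le]
  · have hlt : u b y < u a x := ((wtp_lt_iff h1 h2).1 hyb).trans_le ((le_wtp_iff h1 h2).1 hxa)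
    exact iff_of_true (by linarith) hlt.le
  · have hlt : u a x < u b y := ((wtp_lt_iff h1 h2).1 hxa).trans_le ((le_wtp_iff h1 h2).1 hyb)
    exact iff_of_false (by linarith) hlt.not_ge
  · exact absurd hxy (not_or.2 ⟨hxa.not_ge, hyb.not_ge⟩)

theorem parallel_agent_maximization_general (hu : IsParallel u) (t : A → ℝ) (ht : ∀ a, 0 ≤ t a)
    (haffordable : ∃ c, t c ≤ wtp u c) :
    (∀ a b : A, t a ≤ wtp u a ∨ t b ≤ wtp u b →
      (wtp u b - t b ≤ wtp u a - t a ↔ u b (t b) ≤ u a (t a))) ∧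
    (∀ a : A, (∀ b : A, u b (t b) ≤ u a (t a)) ↔
      (∀ b : A, wtp u b - t b ≤ wtp u a - t a)) := by
  have hcompare (a b : A) (hab : t a ≤ wtp u a ∨ t b ≤ wtp u b) :
      wtp u b - t b ≤ wtp u a - t a ↔ u b (t b) ≤ u a (t a) :=
    hu.wtp_sub_le_wtp_sub_iff (ht a) (ht b) hab
  refine ⟨hcompare, fun a => ?_⟩
  obtain ⟨c, hc⟩ := haffordable
  have haffordable_of_beats (hac : wtp u c - t c ≤ wtp u a - t a) : t a ≤ wtp u a :=
    sub_nonneg.1 ((sub_nonneg.2 hc).trans hac)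
  constructor <;> intro hmax b
  · have ha : t a ≤ wtp u a := haffordable_of_beats ((hcompare a c (.inr hc)).2 (hmax c))
    exact (hcompare a b (.inl ha)).2 (hmax b)
  · have ha : t a ≤ wtp u a := haffordable_of_beats (hmax c)
    exact (hcompare a b (.inl ha)).1 (hmax b)

end WillingnessToPay

/-- For a parallel type and standard prices: (i) among alternatives
priced within the willingness to pay, the comparison of `p_a − t_a` agrees with the
comparison of utilities at the given prices; (ii) the argmax of utility at the prices
coincides with the argmax of `p_a − t_a`. -/
theorem parallel_agent_maximization
    [Fintype A] [Nonempty A]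
    (u : Util A) (hu : IsParallel u)
    (tt : A → ℝ) (h0 : ∀ a, 0 ≤ tt a) (hz : ∃ a, tt a = 0) :
    (∀ a b : A, tt a ≤ wtp u a → tt b ≤ wtp u b →
      (wtp u b - tt b ≤ wtp u a - tt a ↔ u b (tt b) ≤ u a (tt a))) ∧
    (∀ a : A, (∀ b : A, u b (tt b) ≤ u a (tt a)) ↔
      (∀ b : A, wtp u b - tt b ≤ wtp u a - tt a)) := by
  have haffordable : ∃ c, tt c ≤ wtp u c :=
    hz.imp fun c (hc : tt c = 0) => hc.trans_le (wtp_nonneg hu.1 hu.2.1 c)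
  exact (parallel_agent_maximization_general hu tt h0 haffordable).imp_left
    fun hcompare a b ha _ => hcompare a b (.inl ha)

end NQLSC
end
end

section
/- Let (x,t) be a social choice mechanism on an unrestricted parallel utility domain 𝒰 with |A| ≥ 3 that is DSIC, deterministic, onto, IR and satisfies no subsidy, and for distinct a,b ∈ A define L(a,b) := {α ∈ ℝ^n : there exists u ∈ 𝒰 with p_{i,a} − p_{i,b} = α_i for all i and x(u) = a}. Then for every α ∈ ℝ^n and every ε ∈ ℝ^n with ε_i > 0 for all i: (1) if α − ε ∈ L(a,b) then −α ∉ L(b,a); and (2) if α ∉ L(a,b) then −α ∈ L(b,a). -/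
/-!
Common framework: agents indexed by `I`, alternatives `A` (finite, nonempty).
A type of an agent is a family `u : A → ℝ → ℝ`, where `u a z` is the utility
when alternative `a` is selected and the agent pays `z`.
-/

noncomputable section

namespace NQLSC

variable {A I : Type*}

/-- The set `L(a,b)` of vectors of willingness-to-pay differences `p_{·,a} − p_{·,b}`
realizable by a profile in the domain at which `a` is selected. -/
def Lset [Fintype A] [Nonempty A] (U : I → Set (Util A)) (x : (I → Util A) → A)
    (a b : A) : Set (I → ℝ) :=
  {α | ∃ u : I → Util A, (∀ j, u j ∈ U j) ∧
        (∀ i, wtp (u i) a - wtp (u i) b = α i) ∧ x u = a}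

/-!
On nonnegative, individually rational payments a parallel type ranks outcomes by willingness to pay
minus payment, so incentive compatibility yields weak monotonicity in the differences of
willingness to pay. Changing the agents one at a time turns this into positive association of
differences. If `a` were chosen at `u`, `b` at `w`, and every agent's gap `p_a - p_b` were strictly
larger at `w` than at `u`, then a profile with intermediate gaps and all other alternatives pushed
far down would have to select both `a` and `b`.
-/

section WillingnessToPay

variable [Fintype A] [Nonempty A] {u : Util A}

theorem minVal_le_apply_zero (a : A) : minVal u ≤ u a 0 :=
  Finset.inf'_le _ (Finset.mem_univ a)

theorem minVal_le_apply_iff_le_wtp (h1 : S1 u) (h2 : S2 u) {a : A} {z : ℝ} :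
    minVal u ≤ u a z ↔ z ≤ wtp u a := by
  rw [← apply_wtp h1 h2 a, (h1 a).2.le_iff_ge]

theorem IsParallel.wtp_sub_le_wtp_sub (h : IsParallel u) {a b : A} {s r : ℝ}
    (hs : 0 ≤ s) (hr : 0 ≤ r) (hrat : minVal u ≤ u a s) (hle : u b r ≤ u a s) :
    wtp u b - r ≤ wtp u a - s := by
  obtain ⟨h1, h2, hshift⟩ := h
  have hsa : s ≤ wtp u a := (minVal_le_apply_iff_le_wtp h1 h2).1 hrat
  rcases le_or_gt r (wtp u b) with hrb | hrb
  · rcases le_total (u b 0) (u a 0) with hba | hab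
    · rw [← hshift a b hba r hr hrb, (h1 a).2.le_iff_ge] at hle
      linarith
    · rw [← hshift b a hab s hs hsa, (h1 b).2.le_iff_ge] at hle
      linarith
  · linarith

theorem UnrestrictedWTP.exists_wtp_sub_eq {V : Set (Util A)} (hV : UnrestrictedWTP V)
    (lam : A → ℝ) : ∃ v ∈ V, ∀ a b, wtp v a - wtp v b = lam a - lam b := by
  obtain ⟨m, hm⟩ := Finite.exists_min lam
  obtain ⟨v, hv, hwtp⟩ :=
    hV (fun a => lam a - lam m) (fun a => sub_nonneg.2 (hm a)) ⟨m, sub_self _⟩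
  exact ⟨v, hv, fun a b => by rw [hwtp, hwtp, sub_sub_sub_cancel_right]⟩

theorem UnrestrictedWTP.exists_wtp_sub_eq_and_lt {V : Set (Util A)} (hV : UnrestrictedWTP V)
    {a b : A} (hab : a ≠ b) (δ : ℝ) (k : A → ℝ) :
    ∃ v ∈ V, wtp v a - wtp v b = δ ∧
      ∀ c, c ≠ a → c ≠ b → k c < wtp v a - wtp v c ∧ k c < wtp v b - wtp v c := by
  classical
  obtain ⟨v, hv, hsub⟩ := hV.exists_wtp_sub_eq fun c =>
    if c = a then δ else if c = b then 0 else min δ 0 - k c - 1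
  refine ⟨v, hv, by simp [hsub, hab.symm], fun c hca hcb => ?_⟩
  simp only [hsub, if_true, if_neg hab.symm, if_neg hca, if_neg hcb]
  constructor
  · linarith [min_le_left δ 0]
  · linarith [min_le_right δ 0]

end WillingnessToPay

theorem forall_update_mem [DecidableEq I] {β : I → Type*} {s : ∀ i, Set (β i)} {f : ∀ i, β i}
    (hf : ∀ j, f j ∈ s j) {i : I} {y : β i} (hy : y ∈ s i) :
    ∀ j, Function.update f i y j ∈ s j :=
  (Function.forall_update_iff f fun j z => z ∈ s j).2 ⟨hy, fun j _ => hf j⟩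

section Monotonicity

variable [Fintype A] [Nonempty A] [DecidableEq I] {U : I → Set (Util A)}
  {x : (I → Util A) → A} {t : (I → Util A) → I → ℝ}

theorem DSIC.wtp_sub_payment_le (hDSIC : DSIC U x t) (hpar : ∀ i, ∀ v ∈ U i, IsParallel v)
    (hIR : IR U x t) (hNS : NoSubsidy U t) {u : I → Util A} (hu : ∀ j, u j ∈ U j)
    {i : I} {v : Util A} (hv : v ∈ U i) :
    wtp v (x u) - t u i ≤
      wtp v (x (Function.update u i v)) - t (Function.update u i v) i :=
  (hpar i v hv).wtp_sub_le_wtp_sub (hNS _ (forall_update_mem hu hv) i) (hNS u hu i)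
    (hIR u hu i v hv) (hDSIC u hu i v hv)

theorem DSIC.weak_monotonicity (hDSIC : DSIC U x t) (hpar : ∀ i, ∀ v ∈ U i, IsParallel v)
    (hIR : IR U x t) (hNS : NoSubsidy U t) {u : I → Util A} (hu : ∀ j, u j ∈ U j)
    {i : I} {v : Util A} (hv : v ∈ U i) :
    wtp v (x u) - wtp v (x (Function.update u i v)) ≤
      wtp (u i) (x u) - wtp (u i) (x (Function.update u i v)) := by
  have hnew := hDSIC.wtp_sub_payment_le hpar hIR hNS hu hv
  have hold := hDSIC.wtp_sub_payment_le hpar hIR hNS (forall_update_mem hu hv) (hu i)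
  rw [Function.update_idem, Function.update_eq_self] at hold
  linarith

end Monotonicity

/-- Positive association of differences, Roberts' monotonicity condition on a choice rule, with
willingness to pay in place of values: the selected alternative stays selected when every agent's
willingness to pay for it strictly increases relative to every other alternative. -/
def PositiveAssociation [Fintype A] [Nonempty A] (U : I → Set (Util A))
    (x : (I → Util A) → A) : Prop :=
  ∀ ⦃u w : I → Util A⦄ ⦃a : A⦄, (∀ j, u j ∈ U j) → (∀ j, w j ∈ U j) → x u = a →
    (∀ i c, c ≠ a → wtp (u i) a - wtp (u i) c < wtp (w i) a - wtp (w i) c) → x w = a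

section PositiveAssociation

variable [Fintype A] [Nonempty A] {U : I → Set (Util A)} {x : (I → Util A) → A}

theorem DSIC.positiveAssociation [Finite I] [DecidableEq I] {t : (I → Util A) → I → ℝ}
    (hDSIC : DSIC U x t) (hpar : ∀ i, ∀ v ∈ U i, IsParallel v)
    (hIR : IR U x t) (hNS : NoSubsidy U t) :
    PositiveAssociation U x := by
  intro u w a hu hw hxu hlt
  cases nonempty_fintype I
  suffices h : ∀ s : Finset I, x (s.piecewise w u) = a by simpa using h Finset.univ
  intro s
  induction s using Finset.induction_on with
  | empty => rwa [Finset.piecewise_empty]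
  | insert i s hi ih =>
    have hmem : ∀ j, s.piecewise w u j ∈ U j := fun j =>
      s.piecewise_cases w u (· ∈ U j) (hw j) (hu j)
    have hmono := hDSIC.weak_monotonicity hpar hIR hNS hmem (hw i)
    rw [ih, Finset.piecewise_eq_of_notMem s w u hi, ← Finset.piecewise_insert] at hmono
    by_contra hne
    exact (hlt i _ hne).not_ge hmono

theorem PositiveAssociation.exists_wtp_sub_le (hPA : PositiveAssociation U x)
    (hunr : ∀ i, UnrestrictedWTP (U i)) {a b : A} (hab : a ≠ b) {u w : I → Util A}
    (hu : ∀ j, u j ∈ U j) (hw : ∀ j, w j ∈ U j) (hxu : x u = a) (hxw : x w = b) :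
    ∃ i, wtp (w i) a - wtp (w i) b ≤ wtp (u i) a - wtp (u i) b := by
  by_contra! hlt
  choose d hud hdw using fun i => exists_between (hlt i)
  choose z hz hzd hzc using fun i => (hunr i).exists_wtp_sub_eq_and_lt hab (d i) fun c =>
    max (wtp (u i) a - wtp (u i) c) (wtp (w i) b - wtp (w i) c)
  have hza : x z = a := by
    refine hPA hu hz hxu fun i c hca => ?_
    rcases eq_or_ne c b with rfl | hcb
    · rw [hzd]
      exact hud i
    · exact (le_max_left _ _).trans_lt (hzc i c hca hcb).1
  have hzb : x z = b := by
    refine hPA hw hz hxw fun i c hcb => ?_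
    rcases eq_or_ne c a with rfl | hca
    · linarith [hdw i, hzd i]
    · exact (le_max_right _ _).trans_lt (hzc i c hca hcb).2
  exact hab (hza.symm.trans hzb)

theorem PositiveAssociation.exists_add_nonneg_of_mem_Lset (hPA : PositiveAssociation U x)
    (hunr : ∀ i, UnrestrictedWTP (U i)) {a b : A} (hab : a ≠ b) {β γ : I → ℝ}
    (hβ : β ∈ Lset U x a b) (hγ : γ ∈ Lset U x b a) : ∃ i, 0 ≤ β i + γ i := by
  obtain ⟨u, hu, huβ, hxu⟩ := hβ
  obtain ⟨w, hw, hwγ, hxw⟩ := hγ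
  obtain ⟨i, hi⟩ := hPA.exists_wtp_sub_le hunr hab hu hw hxu hxw
  exact ⟨i, by linarith [huβ i, hwγ i]⟩

theorem PositiveAssociation.neg_mem_Lset_of_notMem (hPA : PositiveAssociation U x)
    (hunr : ∀ i, UnrestrictedWTP (U i)) (hOnto : OntoMech U x) {a b : A} (hab : a ≠ b)
    {α : I → ℝ} (hα : α ∉ Lset U x a b) : -α ∈ Lset U x b a := by
  obtain ⟨v, hv, hxv⟩ := hOnto b
  choose w hw hwα hwc using fun i =>
    (hunr i).exists_wtp_sub_eq_and_lt hab (α i) fun c => wtp (v i) b - wtp (v i) c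
  have hxa : x w ≠ a := fun hxw => hα ⟨w, hw, hwα, hxw⟩
  have hxb : x w = b := by
    by_contra hne
    obtain ⟨i, hi⟩ := hPA.exists_wtp_sub_le hunr (Ne.symm hne) hv hw hxv rfl
    exact (hwc i (x w) hxa hne).2.not_ge hi
  exact ⟨w, hw, fun i => by rw [Pi.neg_apply, ← hwα i, neg_sub], hxb⟩

end PositiveAssociation

theorem Lset_claim_two_general [Fintype A] [Nonempty A] [Finite I] [DecidableEq I]
    (U : I → Set (Util A)) (hpar : ∀ i, ∀ u ∈ U i, IsParallel u)
    (hunr : ∀ i, UnrestrictedWTP (U i)) (x : (I → Util A) → A) (t : (I → Util A) → I → ℝ)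
    (hDSIC : DSIC U x t) (hOnto : OntoMech U x) (hIR : IR U x t) (hNS : NoSubsidy U t)
    (a b : A) (hab : a ≠ b) (α ε : I → ℝ) (hε : ∀ i, 0 < ε i) :
    (α - ε ∈ Lset U x a b → -α ∉ Lset U x b a) ∧ (α ∉ Lset U x a b → -α ∈ Lset U x b a) := by
  have hPA := hDSIC.positiveAssociation hpar hIR hNS
  refine ⟨fun hαε hα => ?_, hPA.neg_mem_Lset_of_notMem hunr hOnto hab⟩
  obtain ⟨i, hi⟩ := hPA.exists_add_nonneg_of_mem_Lset hunr hab hαε hα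
  rw [Pi.sub_apply, Pi.neg_apply] at hi
  linarith [hε i]

/-- Properties of the sets `L(a,b)` for a DSIC, deterministic, onto,
IR, no-subsidy mechanism on an unrestricted parallel utility domain with `|A| ≥ 3`. -/
theorem Lset_claim_two
    [Fintype A] [Nonempty A] [Fintype I] [DecidableEq I]
    (hA : 3 ≤ Fintype.card A)
    (U : I → Set (Util A))
    (hpar : ∀ i, ∀ u ∈ U i, IsParallel u)
    (hunr : ∀ i, UnrestrictedWTP (U i))
    (x : (I → Util A) → A) (t : (I → Util A) → I → ℝ)
    (hDSIC : DSIC U x t) (hOnto : OntoMech U x)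
    (hIR : IR U x t) (hNS : NoSubsidy U t) :
    ∀ a b : A, a ≠ b → ∀ α ε : I → ℝ, (∀ i, 0 < ε i) →
      ((α - ε ∈ Lset U x a b → -α ∉ Lset U x b a) ∧
       (α ∉ Lset U x a b → -α ∈ Lset U x b a)) :=
  Lset_claim_two_general U hpar hunr x t hDSIC hOnto hIR hNS
end NQLSC
end
end
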